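/- arXiv:math/0511114 — 3 statements merged into one kernel-verified Lean document; each statement's English description precedes it below -/
import Mathlib

section
/- Let n ≥ 1 and let I, I', J, J' ⊆ {1,…,n−1}. If the n-composition of I' is a rearrangement of the n-composition of I (i.e., they have the same multiset of entries) and the n-composition of J' is a rearrangement of the n-composition of J, then the number of permutations f of {1,…,n} with Des(f⁻¹) ⊇ I and Des(f) ⊇ J equals the number of permutations f of {1,…,n} with Des(f⁻¹) ⊇ I' and Des(f) ⊇ J'. -/
/-!
Cut `{1,…,n}` into consecutive blocks whose sizes are the entries of the `n`-composition of a set.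
Then `J ⊆ Des f` says that `f` is decreasing on every `J`-block, and `I ⊆ Des f⁻¹` that `f⁻¹` is
decreasing on every `I`-block. To `f` attach the matrix counting the `x` in a given `J`-block whose
image lies in a given `I`-block.

Every matrix arising from some permutation arises from exactly one permutation that is decreasing
on blocks in both directions. Existence: swapping the values at two positions lying in one
`J`-block, or whose values lie in one `I`-block, preserves the matrix, so in a lexicographically
largest permutation with the given matrix all such pairs are inversions. Uniqueness: decreasing on
`J`-blocks, together with the matrix, determines the `I`-block of every value, and decreasing on
`I`-blocks then determines the relative order of all values.

Hence the quantity in question is the number of matrices arising from arbitrary permutations, and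
reordering the blocks only permutes the rows and columns of these matrices.
-/

/-- The descent set of a permutation `f` of `{1,…,n}` (realized as `Equiv.Perm (Fin n)`
with 1-based positions: position `i` is the index `i-1` of `Fin n`):
`Des f = {i : 1 ≤ i ≤ n-1 and f(i) > f(i+1)}`. -/
def Des {n : ℕ} (f : Equiv.Perm (Fin n)) : Finset ℕ :=
  (Finset.Ico 1 n).filter fun i =>
    ∃ h : i < n, f ⟨i, h⟩ < f ⟨i - 1, Nat.lt_of_le_of_lt (Nat.sub_le i 1) h⟩

/-- The `n`-composition of a subset `I` of `{1,…,n-1}`: the list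
`(p₁, p₂ - p₁, …, p_k - p_{k-1})` where `p₁ < p₂ < … < p_k` is the increasing
enumeration of `{1,…,n} \ I`. -/
def ncomp (n : ℕ) (I : Finset ℕ) : List ℕ :=
  let P := ((Finset.Icc 1 n) \ I).sort (· ≤ ·)
  List.zipWith (· - ·) P (0 :: P)


section Equiv

variable {α α' β β' γ ι ι' κ κ' : Type*}

/-- `f` is strictly decreasing on each fibre of the labelling `a`. When `a` sends a position to the
index of its block, these fibres are the blocks. -/
def StrictAntiOnFibers [Preorder α] [Preorder β] (a : α → ι) (f : α → β) : Prop :=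
  ∀ i, StrictAntiOn f (a ⁻¹' {i})

theorem StrictAntiOnFibers.lt [Preorder α] [Preorder β] {a : α → ι} {f : α → β}
    (hf : StrictAntiOnFibers a f) {x y : α} (hxy : x < y) (h : a x = a y) : f y < f x :=
  hf (a y) h rfl hxy

theorem strictAntiOnFibers_iff_covBy [PartialOrder α] [SuccOrder α] [IsSuccArchimedean α]
    [Preorder β] [PartialOrder ι] {a : α → ι} (ha : Monotone a) {f : α → β} :
    StrictAntiOnFibers a f ↔ ∀ x y, x ⋖ y → a x = a y → f y < f x := by
  refine ⟨fun hf x y hxy h => hf.lt hxy.lt h, fun hf i => ?_⟩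
  have hconn : (a ⁻¹' {i}).OrdConnected := Set.ordConnected_singleton.preimage_mono ha
  exact strictAntiOn_of_succ_lt hconn fun x hx hxi hsi =>
    hf x _ (Order.covBy_succ_of_not_isMax hx) (hxi.trans hsi.symm)

/-- The matrix whose `(i, j)` entry counts the `x` with label `i` whose image under `f` has label
`j`, encoded as the multiset in which the pair `(i, j)` has that multiplicity. -/
def contingencyTable [Fintype α] (a : α → ι) (b : β → κ) (f : α ≃ β) : Multiset (ι × κ) :=
  Finset.univ.val.map fun x => (a x, b (f x))

section Relabel

variable [Fintype α] [Fintype α'] {a : α → ι} {a' : α' → ι'} {b : β → κ} {b' : β' → κ'}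
  {π : α ≃ α'} {ρ : β ≃ β'}

theorem contingencyTable_equivCongr {e : ι → ι'} {d : κ → κ'} (ha : ∀ x, a' (π x) = e (a x))
    (hb : ∀ y, b' (ρ y) = d (b y)) (f : α ≃ β) :
    contingencyTable a' b' (Equiv.equivCongr π ρ f) =
      (contingencyTable a b f).map (Prod.map e d) := by
  simp only [contingencyTable, ← Multiset.map_univ_val_equiv π, Multiset.map_map]
  exact Multiset.map_congr rfl fun x _ => by simp [ha, hb]

theorem card_range_contingencyTable_congr {e : ι ≃ ι'} {d : κ ≃ κ'}
    (ha : ∀ x, a' (π x) = e (a x)) (hb : ∀ y, b' (ρ y) = d (b y)) :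
    Nat.card (Set.range (contingencyTable a b)) =
      Nat.card (Set.range (contingencyTable a' b')) := by
  have hrange : Set.range (contingencyTable a' b') =
      Multiset.map (Prod.map e d) '' Set.range (contingencyTable a b) := by
    rw [← EquivLike.range_comp _ (Equiv.equivCongr π ρ), ← Set.range_comp]
    exact congrArg Set.range (funext (contingencyTable_equivCongr ha hb))
  rw [hrange, Nat.card_image_of_injective
    (Multiset.map_injective (e.injective.prodMap d.injective))]

end Relabel

theorem comp_swap_eq_self [DecidableEq α] {c : α → γ} {x y : α} (h : c x = c y) :
    c ∘ Equiv.swap x y = c := by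
  rw [Equiv.comp_swap_eq_update, h, Function.update_eq_self, ← h, Function.update_eq_self]

theorem contingencyTable_swap_trans [Fintype α] [DecidableEq α] {a : α → ι} {b : β → κ} {f : α ≃ β}
    {x y : α} (h : a x = a y ∨ b (f x) = b (f y)) :
    contingencyTable a b ((Equiv.swap x y).trans f) = contingencyTable a b f := by
  rcases h with h | h
  · conv_rhs => rw [contingencyTable, ← Multiset.map_univ_val_equiv (Equiv.swap x y)]
    rw [Multiset.map_map]
    exact Multiset.map_congr rfl fun z _ =>
      Prod.ext (congrFun (comp_swap_eq_self h) z).symm (by simp)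
  · exact Multiset.map_congr rfl fun z _ =>
      Prod.ext rfl (congrFun (comp_swap_eq_self (c := b ∘ f) h) z)

/-- If `b (f x) < b (g x)`, then in the fibre of `x` the points with image label at least `b (g x)`
include, for `g`, everything up to `x` but, for `f`, only points before `x`, although the table
determines their number. -/
theorem label_apply_le_of_contingencyTable_eq [LinearOrder α] [Fintype α] [Preorder β]
    [LinearOrder κ] {a : α → ι} {b : β → κ} (hb : Monotone b) {f g : α ≃ β}
    (hf : StrictAntiOnFibers a f) (hg : StrictAntiOnFibers a g)
    (h : contingencyTable a b f = contingencyTable a b g) (x : α) : b (g x) ≤ b (f x) := by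
  classical
  by_contra! hlt
  let upper (e : α ≃ β) : Finset α := {y | a y = a x ∧ b (g x) ≤ b (e y)}
  have hcard : (upper f).card = (upper g).card := by
    have := congrArg (Multiset.countP fun p : ι × κ => p.1 = a x ∧ b (g x) ≤ p.2) h
    rwa [contingencyTable, contingencyTable, Multiset.countP_map, Multiset.countP_map] at this
  have hsub : upper f ⊆ upper g := fun y hy => by
    simp only [upper, Finset.mem_filter, Finset.mem_univ, true_and] at hy ⊢
    refine ⟨hy.1, ?_⟩
    rcases lt_trichotomy y x with hyx | rfl | hxy
    · exact hb (hg.lt hyx hy.1).le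
    · exact le_rfl
    · exact absurd (hy.2.trans (hb (hf.lt hxy hy.1.symm).le)) hlt.not_ge
  have hx : x ∈ upper f := by
    rw [Finset.eq_of_subset_of_card_le hsub hcard.ge]
    simp [upper]
  exact hlt.not_ge (Finset.mem_filter.1 hx).2.2

section ValueOrder

variable [Preorder α] [LinearOrder β] [PartialOrder κ] {b : β → κ} {f g : α ≃ β}

theorem apply_lt_apply_iff_of_strictAntiOnFibers_symm (hb : Monotone b)
    (hf : StrictAntiOnFibers b f.symm) {x y : α} :
    f x < f y ↔ b (f x) < b (f y) ∨ b (f x) = b (f y) ∧ y < x := by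
  have hanti (u v : α) (h : b (f u) = b (f v)) (huv : f u < f v) : v < u := by
    simpa using hf.lt huv h
  refine ⟨fun hlt => (hb hlt.le).lt_or_eq.imp_right fun h => ⟨h, hanti x y h hlt⟩, ?_⟩
  rintro (hlt | ⟨h, hyx⟩)
  · exact hb.reflect_lt hlt
  · by_contra! hle
    exact hyx.not_gt (hanti y x h.symm (hle.lt_of_ne (f.injective.ne hyx.ne)))

theorem eq_of_label_eq_of_strictAntiOnFibers_symm [WellFoundedLT β] (hb : Monotone b)
    (hf : StrictAntiOnFibers b f.symm) (hg : StrictAntiOnFibers b g.symm)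
    (h : ∀ x, b (f x) = b (g x)) : f = g := by
  have hmono : StrictMono (g.symm.trans f) := fun u v huv => by
    rw [Equiv.trans_apply, Equiv.trans_apply,
      apply_lt_apply_iff_of_strictAntiOnFibers_symm hb hf, h, h,
      ← apply_lt_apply_iff_of_strictAntiOnFibers_symm hb hg]
    simpa using huv
  have hid : ⇑(g.symm.trans f) = id := (hmono.range_inj strictMono_id).1 (by simp)
  ext x
  simpa using congrFun hid (g x)

end ValueOrder

section LinearOrder

variable [LinearOrder α] [Fintype α] [LinearOrder β]

theorem exists_strictAntiOnFibers_contingencyTable_eq (a : α → ι) (b : β → κ) (f : α ≃ β) :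
    ∃ g : α ≃ β, (StrictAntiOnFibers b g.symm ∧ StrictAntiOnFibers a g) ∧
      contingencyTable a b g = contingencyTable a b f := by
  obtain ⟨g, hg, hmax⟩ := (Set.toFinite {g | contingencyTable a b g = contingencyTable a b f}
    ).exists_maximalFor (fun g : α ≃ β => toLex ⇑g) _ ⟨f, rfl⟩
  have inversion {x y : α} (hxy : x < y) (h : a x = a y ∨ b (g x) = b (g y)) : g y < g x := by
    by_contra! hle
    have hlt : g x < g y := hle.lt_of_ne (g.injective.ne hxy.ne)
    have hlex : toLex ⇑g < toLex ⇑((Equiv.swap x y).trans g) := by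
      simpa [Function.comp_def] using
        Pi.lex_desc (f := (Equiv.swap x y).trans g) hxy.le (by simpa using hlt)
    exact hlex.not_ge (hmax ((contingencyTable_swap_trans h).trans hg) hlex.le)
  refine ⟨g, ⟨fun i u hu v hv huv => ?_, fun i x hx y hy hxy => ?_⟩, hg⟩
  · by_contra! hle
    have hlt : g.symm u < g.symm v := hle.lt_of_ne (g.symm.injective.ne huv.ne)
    exact huv.not_gt (by simpa using inversion hlt (.inr (by simpa using hu.trans hv.symm)))
  · exact inversion hxy (.inl (hx.trans hy.symm))

variable [LinearOrder κ] {a : α → ι} {b : β → κ} {f g : α ≃ β}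

theorem eq_of_contingencyTable_eq (hb : Monotone b)
    (hf : StrictAntiOnFibers b f.symm ∧ StrictAntiOnFibers a f)
    (hg : StrictAntiOnFibers b g.symm ∧ StrictAntiOnFibers a g)
    (h : contingencyTable a b f = contingencyTable a b g) : f = g :=
  have : Finite β := .of_equiv α f
  eq_of_label_eq_of_strictAntiOnFibers_symm hb hf.1 hg.1 fun x =>
    (label_apply_le_of_contingencyTable_eq hb hg.2 hf.2 h.symm x).antisymm
      (label_apply_le_of_contingencyTable_eq hb hf.2 hg.2 h x)

theorem card_strictAntiOnFibers_eq_card_range_contingencyTable (a : α → ι) (hb : Monotone b) :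
    Nat.card {f : α ≃ β // StrictAntiOnFibers b f.symm ∧ StrictAntiOnFibers a f} =
      Nat.card (Set.range (contingencyTable (β := β) a b)) := by
  refine Nat.card_eq_of_bijective (fun f => ⟨contingencyTable a b f.1, f.1, rfl⟩) ⟨?_, ?_⟩
  · intro f g h
    exact Subtype.ext (eq_of_contingencyTable_eq hb f.2 g.2 (congrArg Subtype.val h))
  · rintro ⟨_, f, rfl⟩
    obtain ⟨g, hg, h⟩ := exists_strictAntiOnFibers_contingencyTable_eq a b f
    exact ⟨⟨g, hg⟩, Subtype.ext h⟩

end LinearOrder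

end Equiv

section List

theorem exists_equiv_getElem_eq_of_perm {γ : Type*} {l l' : List γ} (h : l.Perm l') :
    ∃ e : Fin l.length ≃ Fin l'.length, ∀ k, l'[e k] = l[k] := by
  classical
  exact ⟨⟨h.idxBij, h.symm.idxBij, h.idxBij_rightInverse_idxBij_symm,
    h.idxBij_leftInverse_idxBij_symm⟩, h.getElem_idxBij_eq_getElem⟩

variable {M : Type*} [AddCommMonoid M] [PartialOrder M] [CanonicallyOrderedAdd M] [Sub M]
  [OrderedSub M]

theorem exists_add_sum_take_zipWith_sub_eq_iff {a x : M} {l : List M}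
    (hl : (a :: l).IsChain (· ≤ ·)) :
    (∃ k, a + ((List.zipWith (· - ·) l (a :: l)).take k).sum = x) ↔ x ∈ a :: l := by
  induction l generalizing a with
  | nil => simp [eq_comm]
  | cons b l ih =>
    obtain ⟨hab, hl⟩ := List.isChain_cons_cons.1 hl
    rw [List.mem_cons, ← ih hl, ← Nat.or_exists_add_one]
    simp [← add_assoc, add_tsub_cancel_of_le hab, eq_comm (a := a)]

theorem pos_of_mem_zipWith_sub {a d : M} {l : List M} (hl : (a :: l).IsChain (· < ·))
    (hd : d ∈ List.zipWith (· - ·) l (a :: l)) : 0 < d := by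
  induction l generalizing a with
  | nil => simp at hd
  | cons b l ih =>
    obtain ⟨hab, hl⟩ := List.isChain_cons_cons.1 hl
    rcases List.mem_cons.1 hd with rfl | hd
    · exact tsub_pos_of_lt hab
    · exact ih hl hd

end List

section Composition

variable {n : ℕ}

theorem composition_index_lt_iff (c : Composition n) {x : Fin n} {k : ℕ} :
    (c.index x : ℕ) < k ↔ (x : ℕ) < c.sizeUpTo k where
  mp h := (c.lt_sizeUpTo_index_succ x).trans_le (c.monotone_sizeUpTo h)
  mpr h := c.monotone_sizeUpTo.reflect_lt ((c.sizeUpTo_index_le x).trans_lt h)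

theorem monotone_composition_index (c : Composition n) : Monotone c.index := fun _ y hxy =>
  Fin.le_def.2 <| Nat.lt_succ_iff.1 <| (composition_index_lt_iff c).2 <|
    (Fin.le_def.1 hxy).trans_lt (c.lt_sizeUpTo_index_succ y)

theorem composition_index_eq_iff_of_covBy (c : Composition n) {x y : Fin n} (hxy : x ⋖ y) :
    c.index x = c.index y ↔ (y : ℕ) ∉ Set.range c.sizeUpTo := by
  have hy : (x : ℕ) + 1 = y := Nat.covBy_iff_add_one_eq.1 (Fin.covBy_iff.1 hxy)
  calc c.index x = c.index y
      ↔ ∀ k, (c.index x : ℕ) < k ↔ (c.index y : ℕ) < k := by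
        rw [Fin.ext_iff]
        exact ⟨fun h k => h ▸ Iff.rfl, fun h => eq_of_forall_gt_iff h⟩
    _ ↔ ∀ k, c.sizeUpTo k ≠ y := forall_congr' fun k => by
        rw [composition_index_lt_iff, composition_index_lt_iff]
        omega
    _ ↔ (y : ℕ) ∉ Set.range c.sizeUpTo := by simp

theorem exists_equiv_index_apply_eq_of_blocks_perm {c c' : Composition n}
    (h : c.blocks.Perm c'.blocks) :
    ∃ (e : Fin c.length ≃ Fin c'.length) (π : Equiv.Perm (Fin n)),
      ∀ x, c'.index (π x) = e (c.index x) := by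
  obtain ⟨e, he⟩ := exists_equiv_getElem_eq_of_perm h
  refine ⟨e, c.blocksFinEquiv.symm.trans <|
    (Equiv.sigmaCongr e fun k => finCongr (he k).symm).trans c'.blocksFinEquiv, fun x => ?_⟩
  exact c'.index_embedding _ _

theorem card_strictAntiOnFibers_index_congr {m : ℕ} {c c' : Composition m} {d d' : Composition n}
    (hc : c.blocks.Perm c'.blocks) (hd : d.blocks.Perm d'.blocks) :
    Nat.card {f : Fin m ≃ Fin n // StrictAntiOnFibers d.index f.symm ∧
        StrictAntiOnFibers c.index f} =
      Nat.card {f : Fin m ≃ Fin n // StrictAntiOnFibers d'.index f.symm ∧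
        StrictAntiOnFibers c'.index f} := by
  obtain ⟨e, π, hπ⟩ := exists_equiv_index_apply_eq_of_blocks_perm hc
  obtain ⟨e', ρ, hρ⟩ := exists_equiv_index_apply_eq_of_blocks_perm hd
  have hd_mono := monotone_composition_index d
  have hd'_mono := monotone_composition_index d'
  rw [card_strictAntiOnFibers_eq_card_range_contingencyTable _ hd_mono,
    card_strictAntiOnFibers_eq_card_range_contingencyTable _ hd'_mono,
    card_range_contingencyTable_congr hπ hρ]

end Composition

section DescentComposition

variable {n : ℕ} {I : Finset ℕ}

theorem sortedLT_zero_cons_sort_Icc_sdiff (n : ℕ) (I : Finset ℕ) :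
    (0 :: (Finset.Icc 1 n \ I).sort (· ≤ ·)).SortedLT := by
  refine List.Pairwise.sortedLT (List.pairwise_cons.2 ⟨fun p hp => ?_, ?_⟩)
  · have := (Finset.mem_sdiff.1 ((Finset.mem_sort _).1 hp)).1
    exact (Finset.mem_Icc.1 this).1
  · exact (Finset.sortedLT_sort _).pairwise

theorem pos_of_mem_ncomp {d : ℕ} (hd : d ∈ ncomp n I) : 0 < d :=
  pos_of_mem_zipWith_sub (sortedLT_zero_cons_sort_Icc_sdiff n I).isChain hd

theorem range_sum_take_ncomp (n : ℕ) (I : Finset ℕ) :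
    Set.range (fun k => ((ncomp n I).take k).sum) = insert 0 ↑(Finset.Icc 1 n \ I) := by
  ext i
  have hiff := exists_add_sum_take_zipWith_sub_eq_iff (x := i)
    (sortedLT_zero_cons_sort_Icc_sdiff n I).sortedLE.isChain
  simp only [zero_add, List.mem_cons, Finset.mem_sort] at hiff
  rwa [← Finset.mem_coe] at hiff

theorem sum_ncomp (hn : n ∉ I) : (ncomp n I).sum = n := by
  have hrange := Set.ext_iff.1 (range_sum_take_ncomp n I)
  have hle : (ncomp n I).sum ≤ n := by
    rcases (hrange _).1 ⟨_, congrArg List.sum List.take_length⟩ with h | h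
    · exact h.trans_le n.zero_le
    · exact (Finset.mem_Icc.1 (Finset.mem_sdiff.1 h).1).2
  have hn_mem : n ∈ insert 0 (↑(Finset.Icc 1 n \ I) : Set ℕ) := by
    simpa [hn, Nat.one_le_iff_ne_zero] using em (n = 0)
  obtain ⟨k, hk⟩ := (hrange n).2 hn_mem
  exact hle.antisymm (hk.symm.trans_le ((List.take_sublist k _).sum_le_sum (by simp)))

theorem right_notMem_of_subset_Icc (hI : I ⊆ Finset.Icc 1 (n - 1)) : n ∉ I := fun h => by
  have := Finset.mem_Icc.1 (hI h)
  omega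

/-- The `n`-composition of `I` as a `Composition n`, which gives access to the index of the block
containing a position. -/
def descentComposition (hI : I ⊆ Finset.Icc 1 (n - 1)) : Composition n where
  blocks := ncomp n I
  blocks_pos := pos_of_mem_ncomp
  blocks_sum := sum_ncomp (right_notMem_of_subset_Icc hI)

theorem index_descentComposition_eq_iff_of_covBy (hI : I ⊆ Finset.Icc 1 (n - 1)) {x y : Fin n}
    (hxy : x ⋖ y) :
    (descentComposition hI).index x = (descentComposition hI).index y ↔ (y : ℕ) ∈ I := by
  have hy : (y : ℕ) ≠ 0 := (Nat.zero_le x).trans_lt hxy.lt |>.ne'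
  have hrange : Set.range (descentComposition hI).sizeUpTo = insert 0 ↑(Finset.Icc 1 n \ I) :=
    range_sum_take_ncomp n I
  rw [composition_index_eq_iff_of_covBy _ hxy, hrange]
  simp [hy, Nat.one_le_iff_ne_zero, y.is_le']

theorem mem_Des_iff_of_covBy {f : Equiv.Perm (Fin n)} {x y : Fin n} (hxy : x ⋖ y) :
    (y : ℕ) ∈ Des f ↔ f y < f x := by
  have hy : (x : ℕ) + 1 = y := Nat.covBy_iff_add_one_eq.1 (Fin.covBy_iff.1 hxy)
  have hpred : (⟨y - 1, by omega⟩ : Fin n) = x := Fin.ext (by simp [← hy])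
  have hmem : (y : ℕ) ∈ Finset.Ico 1 n := Finset.mem_Ico.2 ⟨by omega, y.is_lt⟩
  simp [Des, hmem, hpred]

theorem subset_Des_iff (hI : I ⊆ Finset.Icc 1 (n - 1)) {f : Equiv.Perm (Fin n)} :
    I ⊆ Des f ↔ StrictAntiOnFibers (descentComposition hI).index f := by
  rw [strictAntiOnFibers_iff_covBy (monotone_composition_index _)]
  constructor
  · intro h x y hxy hindex
    exact (mem_Des_iff_of_covBy hxy).1
      (h ((index_descentComposition_eq_iff_of_covBy hI hxy).1 hindex))
  · intro h i hi
    obtain ⟨hi1, hin⟩ := Finset.mem_Icc.1 (hI hi)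
    let x : Fin n := ⟨i - 1, by omega⟩
    let y : Fin n := ⟨i, by omega⟩
    have hxy : x ⋖ y := Fin.covBy_iff.2 (Nat.covBy_iff_add_one_eq.2 (Nat.sub_add_cancel hi1))
    exact (mem_Des_iff_of_covBy hxy).2
      (h x y hxy ((index_descentComposition_eq_iff_of_covBy hI hxy).2 hi))

end DescentComposition

/-- The number â_{n,I,J} of permutations `f` of `{1,…,n}` with `Des (f⁻¹) ⊇ I` and
`Des f ⊇ J` only depends on the `n`-partitions of `I` and `J`, i.e. it is unchanged
when the `n`-compositions of `I` and `J` are replaced by rearrangements. -/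
theorem card_descents_superset_pair_depends_only_on_partitions (n : ℕ) (hn : 1 ≤ n)
    (I I' J J' : Finset ℕ)
    (hI : I ⊆ Finset.Icc 1 (n - 1)) (hI' : I' ⊆ Finset.Icc 1 (n - 1))
    (hJ : J ⊆ Finset.Icc 1 (n - 1)) (hJ' : J' ⊆ Finset.Icc 1 (n - 1))
    (hII' : (ncomp n I).Perm (ncomp n I')) (hJJ' : (ncomp n J).Perm (ncomp n J')) :
    Nat.card {f : Equiv.Perm (Fin n) // I ⊆ Des f⁻¹ ∧ J ⊆ Des f} =
      Nat.card {f : Equiv.Perm (Fin n) // I' ⊆ Des f⁻¹ ∧ J' ⊆ Des f} := by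
  simp only [subset_Des_iff hI, subset_Des_iff hI', subset_Des_iff hJ, subset_Des_iff hJ']
  exact card_strictAntiOnFibers_index_congr (c := descentComposition hJ)
    (c' := descentComposition hJ') (d := descentComposition hI) (d' := descentComposition hI')
    hJJ' hII'
end

section
/- Let n ≥ 1, let I ⊆ {1,…,n−1}, and let J, J' ⊆ {1,…,n−1} be such that the n-composition of J' is a rearrangement of the n-composition of J. Then the number of permutations f of {1,…,n} with Des(f⁻¹) = I and Des(f) ⊇ J equals the number of permutations f of {1,…,n} with Des(f⁻¹) = I and Des(f) ⊇ J'. -/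
open Finset

/-! ### Counting by fibres -/

lemma card_subset_eq_sum {A δ : Type*} [Finite A] (d : A → Finset δ) (K : Finset δ) :
    Nat.card {a // d a ⊆ K} = ∑ L ∈ K.powerset, Nat.card {a // d a = L} := by
  classical
  have := Fintype.ofFinite A
  simp only [Nat.card_eq_fintype_card, Fintype.card_subtype]
  rw [card_eq_sum_card_fiberwise (f := d) (t := K.powerset) fun a ha => by simpa using ha]
  refine sum_congr rfl fun L hL => ?_
  rw [filter_filter]
  congr 1
  ext a
  simp only [mem_filter, mem_univ, true_and, and_iff_right_iff_imp]
  rintro rfl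
  exact mem_powerset.1 hL

lemma card_eq_of_card_subset {A B δ : Type*} [Finite A] [Finite B] {d : A → Finset δ}
    {d' : B → Finset δ} (h : ∀ K, Nat.card {a // d a ⊆ K} = Nat.card {b // d' b ⊆ K})
    (K : Finset δ) : Nat.card {a // d a = K} = Nat.card {b // d' b = K} := by
  classical
  induction K using Finset.strongInduction with
  | H K ih =>
    have hproper : ∑ L ∈ K.ssubsets, Nat.card {a // d a = L} =
        ∑ L ∈ K.ssubsets, Nat.card {b // d' b = L} :=
      sum_congr rfl fun L hL => ih L (mem_ssubsets.1 hL)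
    have hK := h K
    rw [card_subset_eq_sum, card_subset_eq_sum, ← add_sum_erase _ _ (mem_powerset_self K),
      ← add_sum_erase _ _ (mem_powerset_self K), ← ssubsets, hproper] at hK
    exact Nat.add_right_cancel hK

lemma exists_equiv_comp_eq {ι κ γ : Type*} [Finite ι] [Finite κ] {f : ι → γ} {g : κ → γ}
    (h : ∀ c, Nat.card {i // f i = c} = Nat.card {k // g k = c}) :
    ∃ e : ι ≃ κ, ∀ i, g (e i) = f i := by
  have fiber (c : γ) : Nonempty ({i // f i = c} ≃ {k // g k = c}) := Finite.card_eq.1 (h c)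
  exact ⟨Equiv.ofFiberEquiv fun c => (fiber c).some, Equiv.ofFiberEquiv_map _⟩

lemma card_fiber_eq_count_map {α μ : Type*} [DecidableEq μ] (s : Finset α) (F : α → μ) (m : μ) :
    Nat.card {a : s // F a = m} = (s.val.map F).count m := by
  rw [Multiset.count_map,
    Nat.card_congr (Equiv.subtypeSubtypeEquivSubtypeInter (· ∈ s) (F · = m))]
  exact Nat.subtype_card {a ∈ s | m = F a} fun a => by rw [mem_filter, eq_comm]

lemma exists_equiv_of_map_card_fiber_eq {ι κ α β : Type*} [Finite ι] [Finite κ]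
    {f : ι → α} {g : κ → β} {s : Finset α} {t : Finset β} (hf : ∀ i, f i ∈ s) (hg : ∀ k, g k ∈ t)
    (h : s.val.map (fun a => Nat.card {i // f i = a}) =
      t.val.map fun b => Nat.card {k // g k = b}) :
    ∃ τ : ι ≃ κ, ∀ i j, g (τ i) = g (τ j) ↔ f i = f j := by
  classical
  obtain ⟨e, he⟩ : ∃ e : s ≃ t, ∀ a, Nat.card {k // g k = e a} = Nat.card {i // f i = a} := by
    refine exists_equiv_comp_eq (f := fun a : s => Nat.card {i // f i = a})
      (g := fun b : t => Nat.card {k // g k = b}) fun m => ?_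
    rw [card_fiber_eq_count_map s fun a => Nat.card {i // f i = a}, h, ← card_fiber_eq_count_map]
  obtain ⟨τ, hτ⟩ : ∃ τ : ι ≃ κ, ∀ i, (⟨g (τ i), hg _⟩ : t) = e ⟨f i, hf i⟩ := by
    refine exists_equiv_comp_eq (f := fun i => e ⟨f i, hf i⟩)
      (g := fun k => (⟨g k, hg k⟩ : t)) fun b => ?_
    simpa [Subtype.ext_iff, ← e.eq_symm_apply] using (he (e.symm b)).symm
  have hval (k l : κ) : g k = g l ↔ (⟨g k, hg k⟩ : t) = ⟨g l, hg l⟩ := Subtype.mk_eq_mk.symm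
  refine ⟨τ, fun i j => ?_⟩
  rw [hval, hτ, hτ, e.apply_eq_iff_eq, Subtype.mk_eq_mk]

/-! ### Sorting within blocks -/

/-- The Young subgroup of a labelling `β`: the permutations that preserve every fibre of `β`. -/
def youngSubgroup {ι α : Type*} (β : ι → α) : Subgroup (Equiv.Perm ι) where
  carrier := {g | ∀ i, β (g i) = β i}
  one_mem' _ := rfl
  mul_mem' hg hh i := (hg _).trans (hh i)
  inv_mem' {g} hg i := by simpa using (hg (g⁻¹ i)).symm

lemma card_youngSubgroup_congr {ι κ α α' : Type*} {γ : ι → α} {γ' : κ → α'} (τ : ι ≃ κ)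
    (hτ : ∀ i j, γ' (τ i) = γ' (τ j) ↔ γ i = γ j) :
    Nat.card (youngSubgroup γ) = Nat.card (youngSubgroup γ') := by
  refine Nat.card_congr (τ.permCongr.subtypeEquiv fun g => τ.forall_congr fun i => ?_)
  rw [Equiv.permCongr_apply, τ.symm_apply_apply, hτ]

lemma strictMono_toLex_iff {ι α δ : Type*} [Preorder ι] [PartialOrder α] [Preorder δ]
    {β : ι → α} {v : ι → δ} (hβ : Monotone β) :
    StrictMono (fun i => toLex (β i, v i)) ↔ ∀ c, StrictMonoOn v (β ⁻¹' {c}) := by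
  simp only [StrictMono, Prod.Lex.toLex_lt_toLex]
  constructor
  · rintro h c i rfl j hj hij
    exact ((h hij).resolve_left (ne_of_lt · hj.symm)).2
  · intro h i j hij
    exact (hβ hij.le).lt_or_eq.imp_right fun hc => ⟨hc, h (β i) rfl hc.symm hij⟩

section Sorting

variable {n : ℕ} {α δ : Type*} [LinearOrder α] [LinearOrder δ] {β : Fin n → α} {v : Fin n → δ}

lemma exists_mem_youngSubgroup_strictMonoOn (hβ : Monotone β)
    (hv : Function.Injective fun i => (β i, v i)) :
    ∃ g ∈ youngSubgroup β, ∀ c, StrictMonoOn (v ∘ g) (β ⁻¹' {c}) := by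
  let key : Fin n → α ×ₗ δ := fun i => toLex (β i, v i)
  let g := Tuple.sort key
  have hmono : Monotone (key ∘ g) := Tuple.monotone_sort key
  have hg : β ∘ g = β :=
    Tuple.unique_monotone (τ := 1) (fun i j hij => Prod.Lex.monotone_fst _ _ (hmono hij)) hβ
  refine ⟨g, congrFun hg, (strictMono_toLex_iff hβ).1 ?_⟩
  have hkey : (fun i => toLex (β i, (v ∘ g) i)) = key ∘ g :=
    funext fun i => congrArg (fun b => toLex (b, v (g i))) (congrFun hg i).symm
  rw [hkey]
  exact hmono.strictMono_of_injective ((toLex.injective.comp hv).comp g.injective)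

lemma eq_one_of_mem_youngSubgroup_of_strictMonoOn (hβ : Monotone β)
    (hv : ∀ c, StrictMonoOn v (β ⁻¹' {c})) {g : Equiv.Perm (Fin n)} (hg : g ∈ youngSubgroup β)
    (hvg : ∀ c, StrictMonoOn (v ∘ g) (β ⁻¹' {c})) : g = 1 := by
  have hkey := (strictMono_toLex_iff hβ).2 hv
  have hkeyg : StrictMono ((fun i => toLex (β i, v i)) ∘ g) := by
    simpa only [Function.comp_def, hg _] using (strictMono_toLex_iff hβ).2 hvg
  exact (Equiv.Perm.monotone_iff g).1
    (StrictMono.monotone fun i j hij => hkey.lt_iff_lt.1 (hkeyg hij))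

end Sorting

/-! ### Counting block-sorted permutations -/

section BlockSorted

variable {n : ℕ} {α α' δ : Type*}

/-- `f` maps no two elements of a fibre of `γ` into the same fibre of `β`. -/
def IsTransverse {ι : Type*} (γ : ι → α) (β : ι → δ) (f : Equiv.Perm ι) : Prop :=
  Function.Injective fun i => (γ i, β (f i))

/-- `f` decreases on the fibres of `γ` and its inverse increases on the fibres of `β`. -/
def IsBlockSorted {ι : Type*} [Preorder ι] (γ : ι → α) (β : ι → δ) (f : Equiv.Perm ι) : Prop :=
  (∀ c, StrictAntiOn f (γ ⁻¹' {c})) ∧ ∀ c, StrictMonoOn (⇑f⁻¹) (β ⁻¹' {c})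

lemma IsTransverse.mul_mul {ι : Type*} {γ : ι → α} {β : ι → δ} {f g h : Equiv.Perm ι}
    (hf : IsTransverse γ β f) (hg : g ∈ youngSubgroup γ) (hh : h ∈ youngSubgroup β) :
    IsTransverse γ β (h * f * g) := by
  have hcomp : (fun i => (γ i, β ((h * f * g) i))) = (fun i => (γ i, β (f i))) ∘ g :=
    funext fun i => Prod.ext (hg i).symm (hh (f (g i)))
  rw [IsTransverse, hcomp]
  exact hf.comp g.injective

lemma card_isTransverse_congr {ι : Type*} {γ : ι → α} {γ' : ι → α'} (β : ι → δ) (τ : Equiv.Perm ι)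
    (hτ : ∀ i j, γ' (τ i) = γ' (τ j) ↔ γ i = γ j) :
    Nat.card {f // IsTransverse γ β f} = Nat.card {f // IsTransverse γ' β f} := by
  refine Nat.card_congr ((Equiv.mulRight τ⁻¹).subtypeEquiv fun f => ?_)
  rw [IsTransverse, IsTransverse, ← τ.injective_comp fun i => (γ' i, _)]
  simp [Function.Injective, hτ]

variable [LinearOrder α] [LinearOrder α'] [LinearOrder δ]
  {γ : Fin n → α} {γ' : Fin n → α'} {β : Fin n → δ} {f g h : Equiv.Perm (Fin n)}

/-- In contrast to `f` and `f⁻¹`, the words `β ∘ f` and `γ ∘ f⁻¹` are unaffected by multiplying `f`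
by an element of the Young subgroup of `β` on the left, respectively of `γ` on the right. -/
lemma isBlockSorted_iff (hγ : Monotone γ) (hβ : Monotone β) :
    IsBlockSorted γ β f ↔
      (∀ c, StrictAntiOn (β ∘ f) (γ ⁻¹' {c})) ∧ ∀ c, StrictMonoOn (γ ∘ ⇑f⁻¹) (β ⁻¹' {c}) := by
  refine ⟨fun ⟨hf, hf'⟩ => ⟨?_, ?_⟩, fun ⟨hf, hf'⟩ => ⟨?_, ?_⟩⟩
  · intro c i hi j hj hij
    have hlt : f j < f i := hf c hi hj hij
    refine (hβ hlt.le).lt_of_ne fun he => hij.not_gt ?_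
    simpa using hf' _ he rfl hlt
  · intro c i hi j hj hij
    have hlt : f⁻¹ i < f⁻¹ j := hf' c hi hj hij
    refine (hγ hlt.le).lt_of_ne fun he => hij.not_gt ?_
    simpa using hf _ he rfl hlt
  · exact fun c i hi j hj hij => hβ.reflect_lt (hf c hi hj hij)
  · exact fun c i hi j hj hij => hγ.reflect_lt (hf' c hi hj hij)

lemma IsBlockSorted.isTransverse (hγ : Monotone γ) (hβ : Monotone β) (hf : IsBlockSorted γ β f) :
    IsTransverse γ β f := by
  intro i j hij
  obtain ⟨hc, he⟩ := Prod.ext_iff.1 hij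
  exact (((isBlockSorted_iff hγ hβ).1 hf).1 (γ j)).injOn hc rfl he

lemma IsBlockSorted.eq_one_of_mul_mul (hγ : Monotone γ) (hβ : Monotone β)
    (hf : IsBlockSorted γ β f) (hg : g ∈ youngSubgroup γ) (hh : h ∈ youngSubgroup β)
    (hfgh : IsBlockSorted γ β (h * f * g)) : g = 1 ∧ h = 1 := by
  rw [isBlockSorted_iff hγ hβ] at hf hfgh
  have hleft : β ∘ ⇑(h * f * g) = (β ∘ f) ∘ g := funext fun i => hh (f (g i))
  have hright : γ ∘ ⇑(h * f * g)⁻¹ = (γ ∘ ⇑f⁻¹) ∘ ⇑h⁻¹ := by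
    rw [mul_inv_rev, mul_inv_rev]
    exact funext fun i => inv_mem hg (f⁻¹ (h⁻¹ i))
  rw [hleft, hright] at hfgh
  exact ⟨eq_one_of_mem_youngSubgroup_of_strictMonoOn hγ (v := OrderDual.toDual ∘ β ∘ f)
      (fun c => (hf.1 c).dual_right) hg fun c => (hfgh.1 c).dual_right,
    inv_eq_one.1 (eq_one_of_mem_youngSubgroup_of_strictMonoOn hβ hf.2 (inv_mem hh) hfgh.2)⟩

lemma IsTransverse.exists_isBlockSorted_mul_mul (hγ : Monotone γ) (hβ : Monotone β)
    (hf : IsTransverse γ β f) :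
    ∃ g ∈ youngSubgroup γ, ∃ h ∈ youngSubgroup β, IsBlockSorted γ β (h * f * g) := by
  obtain ⟨g, hg, hanti⟩ := exists_mem_youngSubgroup_strictMonoOn hγ
    (v := OrderDual.toDual ∘ β ∘ f) hf
  have hinj : Function.Injective fun i => (β i, (γ ∘ ⇑f⁻¹) i) := fun i j hij => by
    obtain ⟨hb, hc⟩ := Prod.ext_iff.1 hij
    exact f⁻¹.injective (hf (Prod.ext hc (by simpa using hb)))
  obtain ⟨h, hh, hmono⟩ := exists_mem_youngSubgroup_strictMonoOn hβ hinj
  refine ⟨g, hg, h⁻¹, inv_mem hh, (isBlockSorted_iff hγ hβ).2 ⟨fun c => ?_, fun c => ?_⟩⟩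
  · have hleft : β ∘ ⇑(h⁻¹ * f * g) = (β ∘ f) ∘ g := funext fun i => inv_mem hh (f (g i))
    rw [hleft]
    exact (hanti c).dual_right
  · have hright : γ ∘ ⇑(h⁻¹ * f * g)⁻¹ = (γ ∘ ⇑f⁻¹) ∘ h := by
      rw [mul_inv_rev, mul_inv_rev, inv_inv]
      exact funext fun i => inv_mem hg (f⁻¹ (h i))
    rw [hright]
    exact hmono c

lemma card_isBlockSorted_mul_card_youngSubgroup (hγ : Monotone γ) (hβ : Monotone β) :
    Nat.card {f // IsBlockSorted γ β f} *
        (Nat.card (youngSubgroup γ) * Nat.card (youngSubgroup β)) =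
      Nat.card {f // IsTransverse γ β f} := by
  rw [← Nat.card_prod, ← Nat.card_prod]
  let act : {f // IsBlockSorted γ β f} × youngSubgroup γ × youngSubgroup β →
      {f // IsTransverse γ β f} := fun x =>
    ⟨x.2.2 * x.1 * x.2.1, (x.1.2.isTransverse hγ hβ).mul_mul x.2.1.2 x.2.2.2⟩
  refine Nat.card_eq_of_bijective act ⟨?_, ?_⟩
  · rintro ⟨⟨f, hf⟩, ⟨g, hg⟩, ⟨h, hh⟩⟩ ⟨⟨f', hf'⟩, ⟨g', hg'⟩, ⟨h', hh'⟩⟩ heq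
    have heq : h * f * g = h' * f' * g' := congrArg Subtype.val heq
    have hf'_eq : f' = h'⁻¹ * h * f * (g * g'⁻¹) := by
      calc f' = h'⁻¹ * (h' * f' * g') * g'⁻¹ := by group
        _ = h'⁻¹ * h * f * (g * g'⁻¹) := by rw [← heq]; group
    obtain ⟨hgg', hhh'⟩ := hf.eq_one_of_mul_mul hγ hβ (mul_mem hg (inv_mem hg'))
      (mul_mem (inv_mem hh') hh) (hf'_eq ▸ hf')
    obtain rfl : g = g' := mul_inv_eq_one.1 hgg'
    obtain rfl : h' = h := inv_mul_eq_one.1 hhh'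
    obtain rfl : f = f' := by simpa using heq
    rfl
  · rintro ⟨f, hf⟩
    obtain ⟨g, hg, h, hh, hs⟩ := hf.exists_isBlockSorted_mul_mul hγ hβ
    refine ⟨⟨⟨_, hs⟩, ⟨g⁻¹, inv_mem hg⟩, ⟨h⁻¹, inv_mem hh⟩⟩, Subtype.ext ?_⟩
    simp only [act]
    group

lemma card_isBlockSorted_congr (hγ : Monotone γ) (hγ' : Monotone γ') (hβ : Monotone β)
    (τ : Equiv.Perm (Fin n)) (hτ : ∀ i j, γ' (τ i) = γ' (τ j) ↔ γ i = γ j) :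
    Nat.card {f // IsBlockSorted γ β f} = Nat.card {f // IsBlockSorted γ' β f} := by
  refine Nat.eq_of_mul_eq_mul_right
    (Nat.mul_pos Nat.card_pos Nat.card_pos :
      0 < Nat.card (youngSubgroup γ) * Nat.card (youngSubgroup β)) ?_
  rw [card_isBlockSorted_mul_card_youngSubgroup hγ hβ, card_youngSubgroup_congr τ hτ,
    card_isBlockSorted_mul_card_youngSubgroup hγ' hβ, card_isTransverse_congr β τ hτ]

end BlockSorted

/-! ### Descent sets and blocks -/

section Blocks

variable {n : ℕ}

/-- The number of the block containing the position `i`, where `i + 1` lies in the same block as `i`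
exactly if `i + 1 ∈ S`. Positions are counted from `0` as elements of `Fin n`; when `0 ∉ S`, the
blocks are numbered from `1`. -/
def blockIndex (S : Finset ℕ) (i : Fin n) : ℕ :=
  Nat.count (· ∉ S) (i + 1)

lemma blockIndex_mono (S : Finset ℕ) : Monotone (blockIndex S : Fin n → ℕ) :=
  fun _ _ hij => Nat.count_monotone _ (Nat.succ_le_succ hij)

lemma strictMonoOn_blockIndex_iff {δ : Type*} [LinearOrder δ] (S : Finset ℕ) (v : Fin n → δ) :
    (∀ c, StrictMonoOn v (blockIndex S ⁻¹' {c})) ↔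
      ∀ i (h : i + 1 < n), i + 1 ∈ S → v ⟨i, by omega⟩ < v ⟨i + 1, h⟩ := by
  rw [← strictMono_toLex_iff (blockIndex_mono S)]
  cases n with
  | zero => exact ⟨fun _ i h => by omega, fun _ i => i.elim0⟩
  | succ m =>
    rw [Fin.strictMono_iff_lt_succ]
    have step (i : ℕ) (h : i + 1 < m + 1) :
        toLex (blockIndex S (⟨i, by omega⟩ : Fin (m + 1)), v ⟨i, by omega⟩) <
            toLex (blockIndex S (⟨i + 1, h⟩ : Fin (m + 1)), v ⟨i + 1, h⟩) ↔
          (i + 1 ∈ S → v ⟨i, by omega⟩ < v ⟨i + 1, h⟩) := by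
      by_cases hS : i + 1 ∈ S <;>
        simp [Prod.Lex.toLex_lt_toLex, blockIndex, Nat.count_succ _ (i + 1), hS]
    exact ⟨fun H i h => (step i h).1 (H ⟨i, by omega⟩),
      fun H i => (step i (by omega)).2 (H i (by omega))⟩

lemma mem_Des_add_one_iff {f : Equiv.Perm (Fin n)} {i : ℕ} :
    i + 1 ∈ Des f ↔ ∃ h : i + 1 < n, f ⟨i + 1, h⟩ < f ⟨i, by omega⟩ := by
  simp only [Des, mem_filter, mem_Ico, add_tsub_cancel_right]
  exact ⟨And.right, fun h => ⟨⟨by omega, h.1⟩, h⟩⟩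

lemma subset_Des_iff_s7 {J : Finset ℕ} (hJ : J ⊆ Icc 1 (n - 1)) (f : Equiv.Perm (Fin n)) :
    J ⊆ Des f ↔ ∀ c, StrictAntiOn f (blockIndex J ⁻¹' {c}) := by
  simp only [← strictMonoOn_toDual_comp_iff, strictMonoOn_blockIndex_iff]
  refine ⟨fun H i _ hi => (mem_Des_add_one_iff.1 (H hi)).2, fun H i hi => ?_⟩
  have hi_mem := mem_Icc.1 (hJ hi)
  obtain ⟨k, rfl⟩ := Nat.exists_eq_add_of_le' hi_mem.1
  exact mem_Des_add_one_iff.2 ⟨by omega, H k (by omega) hi⟩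

lemma Des_subset_iff (K : Finset ℕ) (f : Equiv.Perm (Fin n)) :
    Des f ⊆ K ↔ ∀ c, StrictMonoOn f (blockIndex (Ico 1 n \ K) ⁻¹' {c}) := by
  rw [strictMonoOn_blockIndex_iff]
  constructor
  · intro H i h hi
    refine lt_of_le_of_ne (not_lt.1 fun hlt => ?_) (f.injective.ne (by simp))
    exact (mem_sdiff.1 hi).2 (H (mem_Des_add_one_iff.2 ⟨h, hlt⟩))
  · intro H i hi
    obtain ⟨k, rfl⟩ := Nat.exists_eq_add_of_le' (mem_Ico.1 (mem_filter.1 hi).1).1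
    obtain ⟨h, hlt⟩ := mem_Des_add_one_iff.1 hi
    by_contra hK
    exact hlt.not_gt (H k h (mem_sdiff.2 ⟨mem_Ico.2 ⟨by omega, h⟩, hK⟩))

lemma isBlockSorted_blockIndex_iff {J : Finset ℕ} (hJ : J ⊆ Icc 1 (n - 1)) (K : Finset ℕ)
    (f : Equiv.Perm (Fin n)) :
    IsBlockSorted (blockIndex J) (blockIndex (Ico 1 n \ K)) f ↔ J ⊆ Des f ∧ Des f⁻¹ ⊆ K := by
  rw [IsBlockSorted, subset_Des_iff_s7 hJ, Des_subset_iff]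

end Blocks

/-! ### Block sizes -/

section BlockSizes

variable {n : ℕ} {J : Finset ℕ}

/-- The `b`-th natural number outside `J`, counting from `b = 0`. If `0 ∉ J`, this is `0`
for `b = 0` and otherwise the last position, counted from `1`, of the `b`-th block. -/
noncomputable def blockEnd (J : Finset ℕ) (b : ℕ) : ℕ :=
  Nat.nth (· ∉ J) b

lemma infinite_setOf_notMem (J : Finset ℕ) : {p | p ∉ J}.Infinite :=
  J.finite_toSet.infinite_compl

lemma blockEnd_notMem (J : Finset ℕ) (b : ℕ) : blockEnd J b ∉ J :=
  Nat.nth_mem_of_infinite (infinite_setOf_notMem J) b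

lemma blockEnd_strictMono (J : Finset ℕ) : StrictMono (blockEnd J) :=
  Nat.nth_strictMono (infinite_setOf_notMem J)

lemma blockEnd_zero (h0 : 0 ∉ J) : blockEnd J 0 = 0 :=
  Nat.nth_zero_of_zero (p := (· ∉ J)) h0

lemma blockEnd_count (hn : n ∉ J) : blockEnd J (Nat.count (· ∉ J) n) = n :=
  Nat.nth_count (p := (· ∉ J)) hn

lemma blockIndex_le_iff {i : Fin n} {b : ℕ} : blockIndex J i ≤ b ↔ (i : ℕ) < blockEnd J b :=
  Nat.count_le_iff_le_nth (infinite_setOf_notMem J)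

lemma blockIndex_eq_add_one_iff {i : Fin n} {b : ℕ} :
    blockIndex J i = b + 1 ↔ (i : ℕ) ∈ Ico (blockEnd J b) (blockEnd J (b + 1)) := by
  rw [mem_Ico, ← not_lt, ← blockIndex_le_iff, ← blockIndex_le_iff]
  omega

lemma blockIndex_mem_Icc (h0 : 0 ∉ J) (i : Fin n) :
    blockIndex J i ∈ Icc 1 (Nat.count (· ∉ J) n) := by
  refine mem_Icc.2 ⟨?_, Nat.count_monotone _ i.2⟩
  rw [Nat.one_le_iff_ne_zero, ← Nat.pos_iff_ne_zero, ← not_le, blockIndex_le_iff, blockEnd_zero h0]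
  exact Nat.not_lt_zero _

lemma map_blockEnd_range (h0 : 0 ∉ J) (hn : n ∉ J) :
    ((range (Nat.count (· ∉ J) n)).map
      ⟨fun b => blockEnd J (b + 1), (blockEnd_strictMono J).injective.comp Nat.succ_injective⟩) =
      Icc 1 n \ J := by
  ext x
  rw [mem_map, mem_sdiff, mem_Icc]
  constructor
  · rintro ⟨b, hb, rfl⟩
    have hle : blockEnd J (b + 1) ≤ blockEnd J (Nat.count (· ∉ J) n) :=
      (blockEnd_strictMono J).monotone (mem_range.1 hb)
    exact ⟨⟨(Nat.zero_le _).trans_lt (blockEnd_strictMono J b.lt_succ_self),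
      hle.trans_eq (blockEnd_count hn)⟩, blockEnd_notMem J _⟩
  · rintro ⟨⟨hx1, hxn⟩, hx⟩
    have hpos : Nat.count (· ∉ J) x ≠ 0 := fun hcount => by
      have := blockEnd_count hx
      rw [hcount, blockEnd_zero h0] at this
      omega
    obtain ⟨b, hb⟩ := Nat.exists_eq_succ_of_ne_zero hpos
    exact ⟨b, mem_range.2 (Nat.lt_of_succ_le (hb ▸ Nat.count_monotone _ hxn)),
      (congrArg (blockEnd J) hb.symm).trans (blockEnd_count hx)⟩

lemma sort_sdiff_eq_map_blockEnd (h0 : 0 ∉ J) (hn : n ∉ J) :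
    (Icc 1 n \ J).sort (· ≤ ·) =
      (List.range (Nat.count (· ∉ J) n)).map fun b => blockEnd J (b + 1) := by
  rw [← map_blockEnd_range h0 hn, ← sort_range]
  exact (StrictMono.strictMonoOn (fun _ _ hab =>
    blockEnd_strictMono J (Nat.succ_lt_succ hab)) _).map_finsetSort.symm

lemma card_blockIndex_fiber {b : ℕ} (hb : blockEnd J (b + 1) ≤ n) :
    Nat.card {i : Fin n // blockIndex J i = b + 1} = blockEnd J (b + 1) - blockEnd J b := by
  simp only [blockIndex_eq_add_one_iff]
  rw [← Nat.card_Ico, Nat.card_eq_fintype_card, Fintype.card_subtype,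
    ← card_map Fin.valEmbedding]
  congr 1
  ext x
  simp only [mem_map, mem_filter, mem_univ, true_and, Fin.valEmbedding_apply]
  refine ⟨?_, fun hx => ⟨⟨x, (mem_Ico.1 hx).2.trans_le hb⟩, hx, rfl⟩⟩
  rintro ⟨i, hi, rfl⟩
  exact hi

lemma ncomp_eq_map_card_fiber (h0 : 0 ∉ J) (hn : n ∉ J) :
    ncomp n J = (List.range (Nat.count (· ∉ J) n)).map fun b =>
      Nat.card {i : Fin n // blockIndex J i = b + 1} := by
  rw [ncomp, sort_sdiff_eq_map_blockEnd h0 hn]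
  refine List.ext_getElem (by simp) fun b _ hb => ?_
  rw [List.length_map, List.length_range] at hb
  have hle : blockEnd J (b + 1) ≤ n :=
    ((blockEnd_strictMono J).monotone hb).trans_eq (blockEnd_count hn)
  rw [List.getElem_map, List.getElem_range, card_blockIndex_fiber hle, List.getElem_zipWith]
  cases b <;> simp [blockEnd_zero h0]

lemma coe_ncomp (h0 : 0 ∉ J) (hn : n ∉ J) :
    (ncomp n J : Multiset ℕ) = (Icc 1 (Nat.count (· ∉ J) n)).val.map fun b =>
      Nat.card {i : Fin n // blockIndex J i = b} := by
  have hIcc : Icc 1 (Nat.count (· ∉ J) n) =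
      (range (Nat.count (· ∉ J) n)).map (addRightEmbedding 1) := by
    rw [range_eq_Ico, map_add_right_Ico]
    rfl
  rw [ncomp_eq_map_card_fiber h0 hn, hIcc, map_val, Multiset.map_map]
  rfl

lemma exists_perm_blockIndex_eq_iff {J' : Finset ℕ} (hJ : J ⊆ Icc 1 (n - 1))
    (hJ' : J' ⊆ Icc 1 (n - 1)) (h : (ncomp n J).Perm (ncomp n J')) :
    ∃ τ : Equiv.Perm (Fin n), ∀ i j,
      blockIndex J' (τ i) = blockIndex J' (τ j) ↔ blockIndex J i = blockIndex J j := by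
  have notMem {S : Finset ℕ} (hS : S ⊆ Icc 1 (n - 1)) : 0 ∉ S ∧ n ∉ S :=
    ⟨fun h0 => by simpa using hS h0, fun hn => by have := mem_Icc.1 (hS hn); omega⟩
  obtain ⟨h0, hn⟩ := notMem hJ
  obtain ⟨h0', hn'⟩ := notMem hJ'
  rw [← Multiset.coe_eq_coe, coe_ncomp h0 hn, coe_ncomp h0' hn'] at h
  exact exists_equiv_of_map_card_fiber_eq (blockIndex_mem_Icc h0) (blockIndex_mem_Icc h0') h

end BlockSizes

/-- The number a_{n,I,J} of permutations `f` of `{1,…,n}` with `Des (f⁻¹) = I` and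
`Des f ⊇ J` only depends on `I` and the `n`-partition of `J`, i.e. it is unchanged
when the `n`-composition of `J` is replaced by a rearrangement. -/
theorem card_descents_eq_superset_depends_only_on_partition (n : ℕ) (hn : 1 ≤ n)
    (I J J' : Finset ℕ) (hI : I ⊆ Finset.Icc 1 (n - 1))
    (hJ : J ⊆ Finset.Icc 1 (n - 1)) (hJ' : J' ⊆ Finset.Icc 1 (n - 1))
    (hJJ' : (ncomp n J).Perm (ncomp n J')) :
    Nat.card {f : Equiv.Perm (Fin n) // Des f⁻¹ = I ∧ J ⊆ Des f} =
      Nat.card {f : Equiv.Perm (Fin n) // Des f⁻¹ = I ∧ J' ⊆ Des f} := by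
  obtain ⟨τ, hτ⟩ := exists_perm_blockIndex_eq_iff hJ hJ' hJJ'
  have card_eq (S : Finset ℕ) (p : Finset ℕ → Prop) :
      Nat.card {f : Equiv.Perm (Fin n) // p (Des f⁻¹) ∧ S ⊆ Des f} =
        Nat.card {f : {f : Equiv.Perm (Fin n) // S ⊆ Des f} // p (Des f.1⁻¹)} := by
    simp only [and_comm (a := p _)]
    exact Nat.card_congr (Equiv.subtypeSubtypeEquivSubtypeInter _ fun f => p (Des f⁻¹)).symm
  rw [card_eq J (· = I), card_eq J' (· = I)]
  refine card_eq_of_card_subset (fun K => ?_) I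
  rw [← card_eq J (· ⊆ K), ← card_eq J' (· ⊆ K)]
  simp only [and_comm (b := _ ⊆ Des _), ← isBlockSorted_blockIndex_iff hJ,
    ← isBlockSorted_blockIndex_iff hJ']
  exact card_isBlockSorted_congr (blockIndex_mono J) (blockIndex_mono J') (blockIndex_mono _) τ hτ
end

section
/- For every n ≥ 1, the number of pairs (f,g) of permutations of {1,…,n} satisfying Des(g⁻¹) ⊆ Des(f) and Des(g) ⊇ {1,…,n−2} equals 2^n − 1. -/
open Finset Equiv

variable {n c : ℕ}

theorem Des_subset_Ico (f : Perm (Fin n)) : Des f ⊆ Ico 1 n :=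
  filter_subset _ _

theorem succ_mem_Des {f : Perm (Fin n)} {i : ℕ} (hi : i + 1 < n) :
    i + 1 ∈ Des f ↔ f ⟨i + 1, hi⟩ < f ⟨i, by omega⟩ := by
  simp [Des, hi]

theorem subset_Des_iff_s13 {s : Finset ℕ} {f : Perm (Fin n)} (hs : s ⊆ Ico 1 n) :
    s ⊆ Des f ↔ ∀ (i : ℕ) (hi : i + 1 < n), i + 1 ∈ s → f ⟨i + 1, hi⟩ < f ⟨i, by omega⟩ := by
  refine ⟨fun h i hi his => (succ_mem_Des hi).1 (h his), fun h i his => ?_⟩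
  obtain ⟨hi₁, hin⟩ := mem_Ico.1 (hs his)
  obtain ⟨i, rfl⟩ := Nat.exists_eq_add_of_le' hi₁
  exact (succ_mem_Des hin).2 (h i hin his)

/-- A permutation in one-line notation that decreases on its first `c` entries and decreases on
the remaining ones. -/
def BlockDecreasing (c : ℕ) (f : Perm (Fin n)) : Prop :=
  ∀ ⦃i j : Fin n⦄, i < j → (i.val < c ↔ j.val < c) → f j < f i

theorem blockDecreasing_iff_subset_Des {f : Perm (Fin n)} :
    BlockDecreasing c f ↔ Ico 1 n \ {c} ⊆ Des f := by
  rw [subset_Des_iff_s13 sdiff_subset]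
  constructor
  · intro hf i hi hic
    have hne : i + 1 ≠ c := by simpa [hi] using hic
    exact hf (Fin.mk_lt_mk.2 i.lt_succ_self) (by simp only; omega)
  · rintro h ⟨i, hi⟩ ⟨j, hj⟩ hij hblock
    simp only [Fin.mk_lt_mk] at hij hblock
    induction j, hij using Nat.le_induction with
    | base => exact h i hj (by simp; omega)
    | succ j hij ih =>
      exact (h j hj (by simp; omega)).trans (ih (by omega) (by omega))

/-- The set of the first `c` entries of `f` in one-line notation. -/
def firstValues (c : ℕ) (f : Perm (Fin n)) : Finset (Fin n) :=
  ({i | i.val < c} : Finset (Fin n)).map f.toEmbedding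

theorem apply_mem_firstValues {f : Perm (Fin n)} {i : Fin n} :
    f i ∈ firstValues c f ↔ i.val < c := by
  simp [firstValues]

theorem card_firstValues (hc : c ≤ n) (f : Perm (Fin n)) : #(firstValues c f) = c := by
  rw [firstValues, card_map, Fin.card_filter_val_lt, min_eq_right hc]

theorem firstValues_eq_iff {f : Perm (Fin n)} {S : Finset (Fin n)} :
    firstValues c f = S ↔ ∀ i, f i ∈ S ↔ i.val < c := by
  rw [Finset.ext_iff, ← f.forall_congr_right]
  simp only [apply_mem_firstValues, iff_comm]

theorem firstValues_eq_compl_apply_last (g : Perm (Fin (n + 1))) :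
    firstValues n g = {g (Fin.last n)}ᶜ := by
  rw [firstValues_eq_iff]
  intro i
  simp [← Fin.lt_last_iff_ne_last, Fin.lt_def]

theorem eq_sort_iff_strictMono {α : Type*} [LinearOrder α] {key : Fin n → α}
    (hkey : key.Injective) {f : Perm (Fin n)} :
    f = Tuple.sort key ↔ StrictMono (key ∘ f) := by
  rw [Tuple.eq_sort_iff]
  refine ⟨fun h => h.1.strictMono_of_injective (hkey.comp f.injective), fun h => ⟨h.monotone, ?_⟩⟩
  exact fun i j hij heq => absurd heq (h hij).ne

/-- Sorting by this key lists the elements of `S` before those of its complement, each in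
decreasing order. -/
def blockKey (S : Finset (Fin n)) (v : Fin n) : Bool ×ₗ (Fin n)ᵒᵈ :=
  toLex (decide (v ∉ S), OrderDual.toDual v)

theorem blockKey_injective (S : Finset (Fin n)) : (blockKey S).Injective :=
  fun _ _ h => congrArg Prod.snd h

theorem blockKey_lt_blockKey {S : Finset (Fin n)} {v w : Fin n} :
    blockKey S v < blockKey S w ↔ (v ∈ S ∧ w ∉ S) ∨ ((v ∈ S ↔ w ∈ S) ∧ w < v) := by
  by_cases hv : v ∈ S <;> by_cases hw : w ∈ S <;> simp [blockKey, Prod.Lex.toLex_lt_toLex, hv, hw]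

theorem strictMono_blockKey_comp_iff {S : Finset (Fin n)} {f : Perm (Fin n)} :
    StrictMono (blockKey S ∘ f) ↔ BlockDecreasing #S f ∧ firstValues #S f = S := by
  simp only [StrictMono, Function.comp_apply, blockKey_lt_blockKey, firstValues_eq_iff]
  constructor
  · intro h
    have hlower : ∀ i j, j ≤ i → f i ∈ S → f j ∈ S := by
      grind
    have hcard : #{i | f i ∈ S} = #S := card_equiv f (by simp)
    have hmem (i : Fin n) : f i ∈ S ↔ i.val < #S := by
      rw [← Fin.lt_card_filter_univ_iff_apply_of_imp (f · ∈ S) hlower, hcard]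
    refine ⟨fun i j hij hblock => ?_, hmem⟩
    rw [← hmem, ← hmem] at hblock
    exact ((h hij).resolve_left fun hcross => hcross.2 (hblock.1 hcross.1)).2
  · rintro ⟨hf, hmem⟩ i j hij
    by_cases hblock : i.val < #S ↔ j.val < #S
    · exact Or.inr ⟨by rw [hmem, hmem, hblock], hf hij hblock⟩
    · exact Or.inl ⟨(hmem i).2 (by omega), mt (hmem j).1 (by omega)⟩

theorem existsUnique_blockDecreasing_firstValues_eq (S : Finset (Fin n)) :
    ∃! f, BlockDecreasing #S f ∧ firstValues #S f = S := by
  simp only [← strictMono_blockKey_comp_iff, ← eq_sort_iff_strictMono (blockKey_injective S)]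
  exact existsUnique_eq

theorem card_blockDecreasing (hc : c ≤ n) :
    Nat.card {f : Perm (Fin n) // BlockDecreasing c f} = n.choose c := by
  let firstValuesOf (f : {f : Perm (Fin n) // BlockDecreasing c f}) :
      {S : Finset (Fin n) // #S = c} := ⟨firstValues c f.1, card_firstValues hc f.1⟩
  have hbij : firstValuesOf.Bijective := by
    rw [Function.bijective_iff_existsUnique]
    rintro ⟨S, rfl⟩
    obtain ⟨f, ⟨hf, hfS⟩, huniq⟩ := existsUnique_blockDecreasing_firstValues_eq S
    refine ⟨⟨f, hf⟩, Subtype.ext hfS, fun f' hf' => Subtype.ext ?_⟩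
    exact huniq f' ⟨f'.2, congrArg Subtype.val hf'⟩
  rw [Nat.card_eq_of_bijective _ hbij, Nat.card_eq_fintype_card, Fintype.card_finset_len,
    Fintype.card_fin]

theorem bijective_apply_last_of_blockDecreasing :
    Function.Bijective fun g : {g : Perm (Fin (n + 1)) // BlockDecreasing n g} =>
      g.1 (Fin.last n) := by
  rw [Function.bijective_iff_existsUnique]
  intro k
  have hcard : #({k}ᶜ : Finset (Fin (n + 1))) = n := by simp [card_compl]
  obtain ⟨g, ⟨hg, hgk⟩, huniq⟩ := existsUnique_blockDecreasing_firstValues_eq {k}ᶜ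
  simp only [hcard, firstValues_eq_compl_apply_last, compl_inj_iff, singleton_inj] at hg hgk huniq
  exact ⟨⟨g, hg⟩, hgk, fun g' hg' => Subtype.ext (huniq g' ⟨g'.2, hg'⟩)⟩

theorem Des_inv_of_blockDecreasing {g : Perm (Fin (n + 1))} (hg : BlockDecreasing n g) :
    Des g⁻¹ = Ico 1 (n + 1) \ {(g (Fin.last n)).val} := by
  apply Subset.antisymm
  · intro i hi
    refine mem_sdiff.2 ⟨Des_subset_Ico _ hi, fun hik => ?_⟩
    obtain ⟨hin, hdesc⟩ := (mem_filter.1 hi).2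
    have hlast : g⁻¹ ⟨i, hin⟩ = Fin.last n := by
      rw [Perm.inv_eq_iff_eq]
      exact Fin.ext (mem_singleton.1 hik)
    exact hdesc.not_ge (hlast ▸ Fin.le_last _)
  · rw [subset_Des_iff_s13 sdiff_subset]
    intro i hi hik
    by_contra hasc
    have hlt : g⁻¹ ⟨i, by omega⟩ < g⁻¹ ⟨i + 1, hi⟩ :=
      lt_of_le_of_ne (not_lt.1 hasc) (by simp)
    have hne : g⁻¹ ⟨i + 1, hi⟩ ≠ Fin.last n := by
      intro h
      simp [← Perm.inv_eq_iff_eq.1 h, hi] at hik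
    have hfirst := Fin.val_lt_last hne
    have hdesc := hg hlt (iff_of_true ((Fin.lt_def.1 hlt).trans hfirst) hfirst)
    simp [Fin.lt_def] at hdesc

theorem Des_inclusions_iff_blockDecreasing {f g : Perm (Fin (n + 1))} :
    (Des g⁻¹ ⊆ Des f ∧ Icc 1 (n + 1 - 2) ⊆ Des g) ↔
      BlockDecreasing n g ∧ BlockDecreasing (g (Fin.last n)) f := by
  have hIcc : Icc 1 (n + 1 - 2) = Ico 1 (n + 1) \ {n} := by grind
  rw [hIcc, ← blockDecreasing_iff_subset_Des, and_comm]
  refine and_congr_right fun hg => ?_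
  rw [Des_inv_of_blockDecreasing hg, blockDecreasing_iff_subset_Des]

theorem card_pairs_blockDecreasing_apply_last :
    Nat.card {p : Perm (Fin (n + 1)) × Perm (Fin (n + 1)) //
        BlockDecreasing n p.2 ∧ BlockDecreasing (p.2 (Fin.last n)) p.1} =
      ∑ k : Fin (n + 1), (n + 1).choose k := by
  classical
  let pairsEquiv : {p : Perm (Fin (n + 1)) × Perm (Fin (n + 1)) //
        BlockDecreasing n p.2 ∧ BlockDecreasing (p.2 (Fin.last n)) p.1} ≃
      Σ g : {g : Perm (Fin (n + 1)) // BlockDecreasing n g},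
        {f : Perm (Fin (n + 1)) // BlockDecreasing (g.1 (Fin.last n)) f} :=
    { toFun p := ⟨⟨p.1.2, p.2.1⟩, p.1.1, p.2.2⟩
      invFun q := ⟨(q.2, q.1), q.1.2, q.2.2⟩ }
  have hcard (k : Fin (n + 1)) := card_blockDecreasing k.is_le'
  calc
    _ = ∑ g : {g : Perm (Fin (n + 1)) // BlockDecreasing n g},
          (n + 1).choose (g.1 (Fin.last n)) := by
      rw [Nat.card_congr pairsEquiv, Nat.card_sigma]
      simp only [hcard]
    _ = ∑ k : Fin (n + 1), (n + 1).choose k :=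
      bijective_apply_last_of_blockDecreasing.sum_comp fun k : Fin (n + 1) => (n + 1).choose k

theorem sum_fin_choose (n : ℕ) : ∑ k : Fin n, n.choose k = 2 ^ n - 1 := by
  rw [Fin.sum_univ_eq_sum_range, ← Nat.sum_range_choose, sum_range_succ]
  simp

/-- The number `b_{n,3}(Δ_{n-1})` of pairs `(f,g)` of permutations of `{1,…,n}`
with `Des (g⁻¹) ⊆ Des f` and `Des g ⊇ {1,…,n-2}` equals `2^n - 1`. -/
theorem card_pairs_normal_last_superset (n : ℕ) (hn : 1 ≤ n) :
    Nat.card {p : Equiv.Perm (Fin n) × Equiv.Perm (Fin n) //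
        Des p.2⁻¹ ⊆ Des p.1 ∧ Finset.Icc 1 (n - 2) ⊆ Des p.2} =
      2 ^ n - 1 := by
  obtain ⟨m, rfl⟩ := Nat.exists_eq_add_of_le' hn
  simp only [Des_inclusions_iff_blockDecreasing]
  rw [card_pairs_blockDecreasing_apply_last, sum_fin_choose]
end
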